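/- There is an absolute constant C such that for every locally Gabriel graph G = (P, E) on a set P of n points in convex position in the Euclidean plane (in particular, for every unit distance graph on such a set), there exist a partition P = U ∪ V, linear orders on U and on V, and a partition E = E₁ ∪ E₂ ∪ E₀ with E₁, E₂ ⊆ U × V and |E₀| ≤ C·n, such that the ordered bipartite graph (U, V, E₁) with the given orders and the ordered bipartite graph (U, V, E₂) with both orders reversed each satisfy the path restricted property (each is a PRBG). -/

import Mathlib

open List

/-- Adjacency relation of the bipartite graph with edge set `E ⊆ U × V`,
on the disjoint union of the two sides. -/
def BipAdj {α β : Type*} (E : Set (α × β)) : (α ⊕ β) → (α ⊕ β) → Prop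
  | Sum.inl u, Sum.inr v => (u, v) ∈ E
  | Sum.inr v, Sum.inl u => (u, v) ∈ E
  | _, _ => False

/-- The `U`-vertices visited by a walk, in order of traversal. -/
def uVerts {α β : Type*} (ws : List (α ⊕ β)) : List α := ws.filterMap Sum.getLeft?

/-- The `V`-vertices visited by a walk, in order of traversal. -/
def vVerts {α β : Type*} (ws : List (α ⊕ β)) : List β := ws.filterMap Sum.getRight?

/-- A (nonempty, simple) path in the bipartite graph with edge set `E`. -/
def IsPathList {α β : Type*} (E : Set (α × β)) (ws : List (α ⊕ β)) : Prop :=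
  ws ≠ [] ∧ ws.Chain' (BipAdj E) ∧ ws.Nodup

/-- A forward path: a path whose `U`-vertices and `V`-vertices are both visited in
strictly increasing order, or both in strictly decreasing order. -/
def IsForwardPath {α β : Type*} [Preorder α] [Preorder β]
    (E : Set (α × β)) (ws : List (α ⊕ β)) : Prop :=
  IsPathList E ws ∧
    (((uVerts ws).Chain' (· < ·) ∧ (vVerts ws).Chain' (· < ·)) ∨
      ((uVerts ws).Chain' (· > ·) ∧ (vVerts ws).Chain' (· > ·)))

/-- The internal (degree-two) vertices of a path: all but the two endpoints. -/
def internalVerts {α β : Type*} (ws : List (α ⊕ β)) : List (α ⊕ β) := (ws.drop 1).dropLast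

/-- `x` is a least element of the list `l`. -/
def ListLeast {γ : Type*} [Preorder γ] (l : List γ) (x : γ) : Prop :=
  x ∈ l ∧ ∀ y ∈ l, x ≤ y

/-- `x` is a greatest element of the list `l`. -/
def ListGreatest {γ : Type*} [Preorder γ] (l : List γ) (x : γ) : Prop :=
  x ∈ l ∧ ∀ y ∈ l, y ≤ x

/-- The forward path `ws` has a back edge: an edge of `G` joining the smallest
`U`-vertex `u_a` of `ws` to a vertex `v_j ∈ [v_c, v_d]` strictly greater than the smallest
internal `V`-vertex of `ws`, or an edge joining the smallest `V`-vertex `v_c` of `ws` to a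
vertex `u_i ∈ [u_a, u_b]` strictly greater than the smallest internal `U`-vertex of `ws`. -/
def HasBackEdge {α β : Type*} [Preorder α] [Preorder β]
    (E : Set (α × β)) (ws : List (α ⊕ β)) : Prop :=
  (∃ ua vc vd vint vj,
      ListLeast (uVerts ws) ua ∧ ListLeast (vVerts ws) vc ∧ ListGreatest (vVerts ws) vd ∧
      ListLeast (vVerts (internalVerts ws)) vint ∧
      (ua, vj) ∈ E ∧ vc ≤ vj ∧ vj ≤ vd ∧ vint < vj) ∨
  (∃ vc ua ub uint ui,
      ListLeast (vVerts ws) vc ∧ ListLeast (uVerts ws) ua ∧ ListGreatest (uVerts ws) ub ∧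
      ListLeast (uVerts (internalVerts ws)) uint ∧
      (ui, vc) ∈ E ∧ ua ≤ ui ∧ ui ≤ ub ∧ uint < ui)

/-- A path-restricted ordered bipartite graph: no forward path has a back edge. -/
def IsPRBG {α β : Type*} [Preorder α] [Preorder β] (E : Set (α × β)) : Prop :=
  ∀ ws : List (α ⊕ β), IsForwardPath E ws → ¬ HasBackEdge E ws

/-- A finite set of points in the plane is in convex position if every point of the set is an
extreme point of its convex hull. -/
def ConvexPosition (P : Set (EuclideanSpace ℝ (Fin 2))) : Prop :=
  ∀ p ∈ P, p ∈ (convexHull ℝ P).extremePoints ℝ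

/-- `F` is the edge set of a locally Gabriel graph on `P`.  (In particular the edge set of
any unit distance graph on `P` satisfies this.) -/
def IsLGG (P : Set (EuclideanSpace ℝ (Fin 2)))
    (F : Set (EuclideanSpace ℝ (Fin 2) × EuclideanSpace ℝ (Fin 2))) : Prop :=
  (∀ e ∈ F, e.1 ∈ P ∧ e.2 ∈ P ∧ e.1 ≠ e.2) ∧
  (∀ u v, (u, v) ∈ F → (v, u) ∈ F) ∧
  (∀ u v w, (u, v) ∈ F → (u, w) ∈ F → v ≠ w →
    EuclideanGeometry.angle u v w < Real.pi / 2 ∧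
      EuclideanGeometry.angle u w v < Real.pi / 2)

/-- The reverse of a preorder. -/
def revPreorder {γ : Type*} (i : Preorder γ) : Preorder γ where
  le a b := i.le b a
  lt a b := i.lt b a
  le_refl a := i.le_refl a
  le_trans _ _ _ h h' := i.le_trans _ _ _ h' h
  lt_iff_le_not_ge a b := i.lt_iff_le_not_ge b a


lemma exists_rel_of_mem_of_isChain {γ : Type*} {R : γ → γ → Prop} {l : List γ} :
    ∀ {x z : γ}, (x :: l).IsChain R → z ∈ l → ∃ y ∈ x :: l, R y z := by
  induction l with
  | nil => intro x z _ hz; simp at hz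
  | cons w l ih =>
    intro x z h hz
    rw [List.isChain_cons_cons] at h
    rcases List.mem_cons.1 hz with rfl | hz
    · exact ⟨x, by simp, h.1⟩
    · obtain ⟨y, hy, hR⟩ := ih h.2 hz
      exact ⟨y, List.mem_cons_of_mem _ hy, hR⟩

lemma mem_uVerts {α β : Type*} {ws : List (α ⊕ β)} {u : α} :
    u ∈ uVerts ws ↔ Sum.inl u ∈ ws := by
  simp [uVerts, List.mem_filterMap]

lemma mem_vVerts {α β : Type*} {ws : List (α ⊕ β)} {v : β} :
    v ∈ vVerts ws ↔ Sum.inr v ∈ ws := by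
  simp [vVerts, List.mem_filterMap]

/-- The local configuration whose absence forces the path restricted property: a vertex pair
`u`, `v` with edges from `u` to `v` and some `v' > v`, from `v` to some `u' > u`, and an edge
beyond both `u'` and `v'`. -/
def HasHook {α β : Type*} [Preorder α] [Preorder β] (E : Set (α × β)) : Prop :=
  ∃ u u' u'' v v' v'', (u, v) ∈ E ∧ (u', v) ∈ E ∧ (u, v') ∈ E ∧ (u'', v'') ∈ E ∧
    u < u' ∧ u' ≤ u'' ∧ v < v' ∧ v' ≤ v''

lemma hasHook_of_path {α β : Type*} [Preorder α] [Preorder β] {E : Set (α × β)}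
    {u u' : α} {v v' v'' : β} {l : List (α ⊕ β)}
    (hl : (Sum.inl u :: Sum.inr v :: Sum.inl u' :: l).IsChain (BipAdj E))
    (hu : (uVerts (Sum.inl u :: Sum.inr v :: Sum.inl u' :: l)).Pairwise (· < ·))
    (hv'' : v'' ∈ vVerts l) (hE : (u, v') ∈ E) (hv : v < v') (hv' : v' ≤ v'') : HasHook E := by
  simp only [List.isChain_cons_cons] at hl
  obtain ⟨h₁, h₂, h₃⟩ := hl
  simp only [uVerts, List.filterMap_cons, Sum.getLeft?_inl, Sum.getLeft?_inr,
    List.pairwise_cons] at hu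
  obtain ⟨hu, hu', -⟩ := hu
  obtain ⟨y, hy, hR⟩ := exists_rel_of_mem_of_isChain h₃ (mem_vVerts.1 hv'')
  rcases y with y | y
  · refine ⟨u, u', y, v, v', v'', h₁, h₂, hE, hR, hu _ (by simp), ?_, hv, hv'⟩
    rcases List.mem_cons.1 hy with hy | hy
    · exact le_of_eq (Sum.inl_injective hy).symm
    · exact (hu' _ (mem_uVerts.2 hy)).le
  · exact hR.elim

lemma ListLeast.eq_head {γ : Type*} [Preorder γ] {a b : γ} {l : List γ} (hb : ListLeast (a :: l) b)
    (h : ∀ c ∈ l, a < c) : b = a := by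
  rcases List.mem_cons.1 hb.1 with h' | h'
  · exact h'
  · exact absurd (h _ h') (hb.2 a (by simp)).not_gt

lemma vVerts_dropLast_inl_subset {α β : Type*} (u : α) (l : List (α ⊕ β)) :
    vVerts (Sum.inl u :: l).dropLast ⊆ vVerts l := by
  intro c hc
  simpa [mem_vVerts] using List.dropLast_subset _ (mem_vVerts.1 hc)

lemma hasHook_of_increasing {α β : Type*} [Preorder α] [Preorder β] {E : Set (α × β)}
    {ws : List (α ⊕ β)} (hc : ws.IsChain (BipAdj E)) (hu : (uVerts ws).Pairwise (· < ·))
    (hv : (vVerts ws).Pairwise (· < ·)) {ua : α} {vd vint vj : β}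
    (hua : ListLeast (uVerts ws) ua) (hvd : vd ∈ vVerts ws)
    (hleast : ListLeast (vVerts (internalVerts ws)) vint) (hE : (ua, vj) ∈ E)
    (hj : vint < vj) (hjd : vj ≤ vd) : HasHook E := by
  match ws, hc, hu, hv, hua, hvd, hleast with
  | [], _, _, _, _, hvd, _ => simp [vVerts] at hvd
  | [_], _, _, _, _, _, hleast => exact absurd hleast.1 (by simp [vVerts, internalVerts])
  | [_, _], _, _, _, _, _, hleast => exact absurd hleast.1 (by simp [vVerts, internalVerts])
  | Sum.inl _ :: Sum.inl _ :: _, hc, _, _, _, _, _ => simp [BipAdj] at hc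
  | Sum.inr _ :: Sum.inr _ :: _, hc, _, _, _, _, _ => simp [BipAdj] at hc
  | _ :: Sum.inl _ :: Sum.inl _ :: _, hc, _, _, _, _, _ => simp [BipAdj] at hc
  | _ :: Sum.inr _ :: Sum.inr _ :: _, hc, _, _, _, _, _ => simp [BipAdj] at hc
  | Sum.inl u :: Sum.inr v :: Sum.inl u' :: l, hc, hu, hv, hua, hvd, hleast =>
    have hu₀ := hu
    simp only [uVerts, vVerts, internalVerts, List.filterMap_cons, Sum.getLeft?_inl,
      Sum.getLeft?_inr, Sum.getRight?_inl, Sum.getRight?_inr, List.drop_succ_cons, List.drop_zero,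
      List.dropLast_cons_cons, List.pairwise_cons] at hu hv hua hvd hleast
    obtain rfl := hua.eq_head hu.1
    obtain rfl := hleast.eq_head fun c hc => hv.1 c (vVerts_dropLast_inl_subset _ _ hc)
    refine hasHook_of_path hc hu₀ ?_ hE hj hjd
    rcases List.mem_cons.1 hvd with rfl | hvd
    · exact absurd hj hjd.not_gt
    · exact hvd
  | [Sum.inr _, Sum.inl _, Sum.inr _], _, _, _, _, _, hleast =>
    exact absurd hleast.1 (by simp [vVerts, internalVerts])
  | Sum.inr _ :: Sum.inl _ :: Sum.inr _ :: Sum.inr _ :: _, hc, _, _, _, _, _ =>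
    simp [BipAdj] at hc
  | Sum.inr v₀ :: Sum.inl u :: Sum.inr v :: Sum.inl u' :: l, hc, hu, hv, hua, hvd, hleast =>
    have hu₀ := hu
    simp only [uVerts, vVerts, internalVerts, List.filterMap_cons, Sum.getLeft?_inl,
      Sum.getLeft?_inr, Sum.getRight?_inl, Sum.getRight?_inr, List.drop_succ_cons, List.drop_zero,
      List.dropLast_cons_cons, List.pairwise_cons] at hu hv hua hvd hleast
    obtain rfl := hua.eq_head hu.1
    obtain rfl := hleast.eq_head fun c hc => hv.2.1 c (vVerts_dropLast_inl_subset _ _ hc)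
    have hlt := hj.trans_le hjd
    refine hasHook_of_path (List.isChain_cons_cons.1 hc).2 hu₀ ?_ hE hj hjd
    rcases List.mem_cons.1 hvd with rfl | hvd
    · exact absurd (hv.1 _ (by simp)) hlt.not_gt
    rcases List.mem_cons.1 hvd with rfl | hvd
    · exact absurd hlt (lt_irrefl _)
    · exact hvd

lemma uVerts_map_swap {α β : Type*} (ws : List (α ⊕ β)) :
    uVerts (ws.map Sum.swap) = vVerts ws := by
  rw [uVerts, vVerts, List.filterMap_map]
  congr 1
  ext (_ | _) <;> rfl

lemma vVerts_map_swap {α β : Type*} (ws : List (α ⊕ β)) :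
    vVerts (ws.map Sum.swap) = uVerts ws := by
  rw [uVerts, vVerts, List.filterMap_map]
  congr 1
  ext (_ | _) <;> rfl

lemma internalVerts_map {α β γ δ : Type*} (ws : List (α ⊕ β)) (f : α ⊕ β → γ ⊕ δ) :
    internalVerts (ws.map f) = (internalVerts ws).map f := by
  simp [internalVerts, List.map_dropLast]

lemma internalVerts_reverse {α β : Type*} (ws : List (α ⊕ β)) :
    internalVerts ws.reverse = (internalVerts ws).reverse := by
  simp [internalVerts, List.tail_reverse, List.dropLast_reverse, List.tail_dropLast]

lemma bipAdj_symm {α β : Type*} {E : Set (α × β)} {a b : α ⊕ β} (h : BipAdj E a b) :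
    BipAdj E b a := by
  rcases a with a | a <;> rcases b with b | b <;> exact h

lemma listLeast_reverse {γ : Type*} [Preorder γ] {l : List γ} {x : γ} :
    ListLeast l.reverse x ↔ ListLeast l x := by
  simp [ListLeast]

lemma not_hasBackEdge_of_increasing {α β : Type*} [Preorder α] [Preorder β] {E : Set (α × β)}
    (hE : ¬ HasHook E) {ws : List (α ⊕ β)} (hc : ws.IsChain (BipAdj E))
    (hu : (uVerts ws).Pairwise (· < ·)) (hv : (vVerts ws).Pairwise (· < ·)) :
    ¬ HasBackEdge E ws := by
  rintro (⟨ua, vc, vd, vint, vj, hua, -, hvd, hleast, hedge, -, hjd, hj⟩ |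
    ⟨vc, ua, ub, uint, ui, hvc, -, hub, hleast, hedge, -, hib, hi⟩)
  · exact hE (hasHook_of_increasing hc hu hv hua hvd.1 hleast hedge hj hjd)
  · have hc' : (ws.map Sum.swap).IsChain (BipAdj {e : β × α | (e.2, e.1) ∈ E}) := by
      rw [List.isChain_map]
      refine hc.imp ?_
      rintro (a | a) (b | b) h <;> exact h
    have := hasHook_of_increasing (ua := vc) (vd := ub) (vint := uint) (vj := ui) hc'
      (by rwa [uVerts_map_swap]) (by rwa [vVerts_map_swap]) (by rwa [uVerts_map_swap])
      (by rw [vVerts_map_swap]; exact hub.1)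
      (by rwa [internalVerts_map, vVerts_map_swap]) hedge hi hib
    obtain ⟨v, v', v'', u, u', u'', h₁, h₂, h₃, h₄, h₅, h₆, h₇, h₈⟩ := this
    exact hE ⟨u, u', u'', v, v', v'', h₁, h₃, h₂, h₄, h₇, h₈, h₅, h₆⟩

lemma isPRBG_of_not_hasHook {α β : Type*} [Preorder α] [Preorder β] {E : Set (α × β)}
    (hE : ¬ HasHook E) : IsPRBG E := by
  rintro ws ⟨⟨-, hc, -⟩, ⟨hu, hv⟩ | ⟨hu, hv⟩⟩
  · exact not_hasBackEdge_of_increasing hE hc (List.isChain_iff_pairwise.1 hu)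
      (List.isChain_iff_pairwise.1 hv)
  · have h := not_hasBackEdge_of_increasing hE (ws := ws.reverse)
      (by rw [List.isChain_reverse]; exact List.IsChain.imp (fun _ _ h => bipAdj_symm h) hc)
      (by rw [uVerts, List.filterMap_reverse, List.pairwise_reverse]
          exact List.isChain_iff_pairwise.1 hu)
      (by rw [vVerts, List.filterMap_reverse, List.pairwise_reverse]
          exact List.isChain_iff_pairwise.1 hv)
    simpa only [HasBackEdge, internalVerts_reverse, uVerts, vVerts, List.filterMap_reverse,
      listLeast_reverse, ListGreatest, List.mem_reverse] using h

lemma card_le_two_mul_of_extremal {γ : Type*} [DecidableEq γ] (P : Finset γ)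
    (S : Finset (γ × γ)) (x : γ → ℝ) (hS : ∀ e ∈ S, e.1 ∈ P ∧ e.2 ∈ P)
    (hinj₁ : ∀ a b b', (a, b) ∈ S → (a, b') ∈ S → x b = x b' → b = b')
    (hinj₂ : ∀ a a' b, (a, b) ∈ S → (a', b) ∈ S → x a = x a' → a = a')
    (h : ∀ a a' b b', (a, b) ∈ S → (a', b) ∈ S → (a, b') ∈ S → x a' < x a → ¬ x b < x b') :
    S.card ≤ 2 * P.card := by
  classical
  let S₁ := S.filter fun e => ∀ b', (e.1, b') ∈ S → x b' ≤ x e.2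
  let S₂ := S.filter fun e => ∀ a', (a', e.2) ∈ S → x e.1 ≤ x a'
  have hsub : S ⊆ S₁ ∪ S₂ := by
    rintro ⟨a, b⟩ he
    by_contra hcon
    simp only [S₁, S₂, Finset.mem_union, Finset.mem_filter, he, true_and, not_or, not_forall,
      not_le] at hcon
    obtain ⟨⟨b', hb', hb⟩, a', ha', ha⟩ := hcon
    exact h a a' b b' he ha' hb' ha hb
  have h₁ : S₁.card ≤ P.card := by
    refine Finset.card_le_card_of_injOn Prod.fst (fun e he => (hS e (Finset.mem_filter.1 he).1).1) ?_
    rintro ⟨a, b⟩ he ⟨a', b'⟩ he' (rfl : a = a')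
    obtain ⟨he, hm⟩ := Finset.mem_filter.1 he
    obtain ⟨he', hm'⟩ := Finset.mem_filter.1 he'
    rw [hinj₁ a b b' he he' (le_antisymm (hm' b he) (hm b' he'))]
  have h₂ : S₂.card ≤ P.card := by
    refine Finset.card_le_card_of_injOn Prod.snd (fun e he => (hS e (Finset.mem_filter.1 he).1).2) ?_
    rintro ⟨a, b⟩ he ⟨a', b'⟩ he' (rfl : b = b')
    obtain ⟨he, hm⟩ := Finset.mem_filter.1 he
    obtain ⟨he', hm'⟩ := Finset.mem_filter.1 he'
    rw [hinj₂ a a' b he he' (le_antisymm (hm a' he') (hm' a he))]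
  have := Finset.card_le_card hsub
  have := Finset.card_union_le S₁ S₂
  omega

section Coordinates

variable {γ : Type*} (x y : γ → ℝ)

/-- The slope of the chord `ab` in the coordinates `x`, `y`. -/
noncomputable def chordSlope (a b : γ) : ℝ := (y b - y a) / (x b - x a)

/-- The inner product of the vectors `b → a` and `b → c` in the coordinates `x`, `y`. -/
def dotAt (a b c : γ) : ℝ :=
  (x a - x b) * (x c - x b) + (y a - y b) * (y c - y b)

/-- `U` is the graph of a strictly concave function in the coordinates `x`, `y`. -/
def IsConcaveChain (U : Finset γ) : Prop :=
  Set.InjOn x U ∧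
    ∀ p ∈ U, ∀ q ∈ U, ∀ r ∈ U, x p < x q → x q < x r → chordSlope x y q r < chordSlope x y p q

/-- The lower chain `V` rises towards the upper chain `U` to the right of the pair `u`, `v`. -/
def RightConvergent (U V : Finset γ) (u v : γ) : Prop :=
  ∀ u' ∈ U, ∀ v' ∈ V, x u < x u' → x v < x v' → chordSlope x y u u' < chordSlope x y v v'

/-- The lower chain `V` rises towards the upper chain `U` to the left of the pair `u`, `v`. -/
def LeftConvergent (U V : Finset γ) (u v : γ) : Prop :=
  ∀ u' ∈ U, ∀ v' ∈ V, x u' < x u → x v' < x v → chordSlope x y v v' < chordSlope x y u u'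

variable {x y}

lemma chordSlope_comm (a b : γ) : chordSlope x y a b = chordSlope x y b a := by
  rw [chordSlope, chordSlope, ← neg_sub (y a), ← neg_sub (x a), neg_div_neg_eq]

lemma chordSlope_neg_snd (a b : γ) :
    chordSlope x (fun p => -y p) a b = -chordSlope x y a b := by
  simp only [chordSlope]; ring

lemma chordSlope_neg_fst (a b : γ) :
    chordSlope (fun p => -x p) y a b = -chordSlope x y a b := by
  rw [chordSlope, chordSlope, ← div_neg]; ring

lemma sub_eq_chordSlope_mul {a b : γ} (h : x a ≠ x b) :
    y b - y a = chordSlope x y a b * (x b - x a) := by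
  rw [chordSlope, div_mul_cancel₀ _ (sub_ne_zero.2 h.symm)]

lemma dotAt_eq {a b c : γ} (h : x b ≠ x c) :
    dotAt x y a b c = (x c - x b) * ((x a - x b) + (y a - y b) * chordSlope x y b c) := by
  rw [dotAt, sub_eq_chordSlope_mul (y := y) h]; ring

lemma isConcaveChain_neg_fst {U : Finset γ} (hU : IsConcaveChain x y U) :
    IsConcaveChain (fun p => -x p) y U := by
  refine ⟨fun p hp q hq h => hU.1 hp hq (neg_injective h), fun p hp q hq r hr h₁ h₂ => ?_⟩
  have := hU.2 r hr q hq p hp (neg_lt_neg_iff.1 h₂) (neg_lt_neg_iff.1 h₁)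
  rw [chordSlope_neg_fst, chordSlope_neg_fst, chordSlope_comm p q, chordSlope_comm q r]
  linarith

lemma leftConvergent_neg_fst {U V : Finset γ} {u v : γ} (h : RightConvergent x y U V u v) :
    LeftConvergent (fun p => -x p) y U V u v := by
  intro u' hu' v' hv' h₁ h₂
  rw [chordSlope_neg_fst, chordSlope_neg_fst, neg_lt_neg_iff]
  exact h u' hu' v' hv' (neg_lt_neg_iff.1 h₁) (neg_lt_neg_iff.1 h₂)

/-- In a concave chain, an edge cannot be acute towards both outer sides. -/
lemma IsConcaveChain.not_acute {U : Finset γ} (hU : IsConcaveChain x y U) {a a' b b' : γ}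
    (ha : a ∈ U) (ha' : a' ∈ U) (hb : b ∈ U) (hb' : b' ∈ U)
    (h₁ : x a' < x a) (h₂ : x a < x b) (h₃ : x b < x b')
    (hd : 0 < dotAt x y a b b') (hd' : 0 < dotAt x y b a a') : False := by
  have c₁ := hU.2 a' ha' a ha b hb h₁ h₂
  have c₂ := hU.2 a ha b hb b' hb' h₂ h₃
  rw [dotAt_eq h₃.ne] at hd
  rw [dotAt_eq h₁.ne', chordSlope_comm a a', sub_eq_chordSlope_mul (y := y) h₂.ne] at hd'
  have e₁ := pos_of_mul_pos_right hd (by linarith)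
  have e₂ := neg_of_mul_pos_right hd' (by linarith)
  have e₃ : y a - y b = -(chordSlope x y a b * (x b - x a)) := by
    rw [← sub_eq_chordSlope_mul h₂.ne]; ring
  rw [e₃] at e₁
  generalize chordSlope x y a b = s at *
  generalize chordSlope x y a' a = t at *
  generalize chordSlope x y b b' = r at *
  have f₁ : 0 < (x b - x a) * (-1 - s * r) := by linarith
  have f₂ : 0 < (x b - x a) * (-1 - s * t) := by linarith
  have f₁ := pos_of_mul_pos_right f₁ (by linarith)
  have f₂ := pos_of_mul_pos_right f₂ (by linarith)
  rcases le_total 0 s with h | h <;> nlinarith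

/-- Slopes of chords with a common left endpoint decrease along a concave chain. -/
lemma IsConcaveChain.chordSlope_le {U : Finset γ} (hU : IsConcaveChain x y U) {p q r : γ}
    (hp : p ∈ U) (hq : q ∈ U) (hr : r ∈ U) (h₁ : x p < x q) (h₂ : x q ≤ x r) :
    chordSlope x y p r ≤ chordSlope x y p q := by
  rcases h₂.lt_or_eq with h₂ | h₂
  · have := hU.2 p hp q hq r hr h₁ h₂
    have e₁ := sub_eq_chordSlope_mul (y := y) h₁.ne
    have e₂ := sub_eq_chordSlope_mul (y := y) h₂.ne
    rw [chordSlope, div_le_iff₀ (by linarith)]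
    nlinarith
  · rw [hU.1 hq hr h₂]

/-- Every pair is convergent on at least one side. -/
lemma leftConvergent_of_not_rightConvergent {U V : Finset γ} (hU : IsConcaveChain x y U)
    (hV : IsConcaveChain x (fun p => -y p) V) {u v : γ} (hu : u ∈ U) (hv : v ∈ V)
    (h : ¬ RightConvergent x y U V u v) : LeftConvergent x y U V u v := by
  intro u₁ hu₁ v₁ hv₁ h₁ h₂
  simp only [RightConvergent, not_forall, not_lt] at h
  obtain ⟨u₂, hu₂, v₂, hv₂, h₃, h₄, h₅⟩ := h
  have c₁ := hU.2 u₁ hu₁ u hu u₂ hu₂ h₁ h₃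
  have c₂ := hV.2 v₁ hv₁ v hv v₂ hv₂ h₂ h₄
  rw [chordSlope_neg_snd, chordSlope_neg_snd] at c₂
  rw [chordSlope_comm v, chordSlope_comm u]
  linarith

/-- Two acute angles on the right of `u`, `v` exclude pairs further right that are
convergent to the left. -/
lemma LeftConvergent.not_acute {U V : Finset γ} (hU : IsConcaveChain x y U)
    (hV : IsConcaveChain x (fun p => -y p) V) {u u' u'' v v' v'' : γ}
    (h : LeftConvergent x y U V u'' v'')
    (hu : u ∈ U) (hu' : u' ∈ U) (hu'' : u'' ∈ U) (hv : v ∈ V) (hv' : v' ∈ V) (hv'' : v'' ∈ V)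
    (hy : y v < y u) (h₁ : x u < x u') (h₂ : x u' ≤ x u'') (h₃ : x v < x v') (h₄ : x v' ≤ x v'')
    (hd : 0 < dotAt x y v u u') (hd' : 0 < dotAt x y u v v') : False := by
  have c₁ := hU.chordSlope_le hu hu' hu'' h₁ h₂
  have c₂ := hV.chordSlope_le hv hv' hv'' h₃ h₄
  rw [chordSlope_neg_snd, chordSlope_neg_snd] at c₂
  have c₃ := h u hu v hv (h₁.trans_le h₂) (h₃.trans_le h₄)
  rw [chordSlope_comm v'', chordSlope_comm u''] at c₃
  rw [dotAt_eq h₁.ne] at hd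
  rw [dotAt_eq h₃.ne] at hd'
  have e₁ := pos_of_mul_pos_right hd (by linarith)
  have e₂ := pos_of_mul_pos_right hd' (by linarith)
  nlinarith

end Coordinates

lemma IsConcaveChain.card_edges_le {γ : Type*} [DecidableEq γ] {x y : γ → ℝ} {U : Finset γ}
    (hU : IsConcaveChain x y U) {F : Set (γ × γ)} (hsymm : ∀ u v, (u, v) ∈ F → (v, u) ∈ F)
    (hdot : ∀ u v w, (u, v) ∈ F → (u, w) ∈ F → v ≠ w → 0 < dotAt x y u v w)
    {S : Finset (γ × γ)} (hS : ∀ e ∈ S, e.1 ∈ U ∧ e.2 ∈ U ∧ e ∈ F ∧ x e.1 < x e.2) :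
    S.card ≤ 2 * U.card := by
  refine card_le_two_mul_of_extremal U S x (fun e he => ⟨(hS e he).1, (hS e he).2.1⟩)
    (fun a b b' h h' => hU.1 (hS _ h).2.1 (hS _ h').2.1)
    (fun a a' b h h' => hU.1 (hS _ h).1 (hS _ h').1) ?_
  intro a a' b b' h₁ h₂ h₃ ha hb
  refine hU.not_acute (hS _ h₁).1 (hS _ h₂).1 (hS _ h₁).2.1 (hS _ h₃).2.1 ha (hS _ h₁).2.2.2 hb
    (hdot a b b' (hS _ h₁).2.2.1 (hS _ h₃).2.2.1 (ne_of_apply_ne x hb.ne)) ?_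
  exact hdot b a a' (hsymm _ _ (hS _ h₁).2.2.1) (hsymm _ _ (hS _ h₂).2.2.1)
    (ne_of_apply_ne x ha.ne')

lemma card_biconvergent_le {γ : Type*} [DecidableEq γ] {x y : γ → ℝ} {P U V : Finset γ}
    (hUP : U ⊆ P) (hVP : V ⊆ P) (hU : Set.InjOn x U) (hV : Set.InjOn x V) {S : Finset (γ × γ)}
    (hS : ∀ e ∈ S, e.1 ∈ U ∧ e.2 ∈ V ∧ RightConvergent x y U V e.1 e.2 ∧
      LeftConvergent x y U V e.1 e.2) :
    S.card ≤ 2 * P.card := by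
  refine card_le_two_mul_of_extremal P S x (fun e he => ⟨hUP (hS e he).1, hVP (hS e he).2.1⟩)
    (fun a b b' h h' => hV (hS _ h).2.1 (hS _ h').2.1)
    (fun a a' b h h' => hU (hS _ h).1 (hS _ h').1) ?_
  intro a a' b b' h₁ h₂ h₃ ha hb
  have e₁ := (hS _ h₂).2.2.1 a (hS _ h₁).1 b' (hS _ h₃).2.1 ha hb
  have e₂ := (hS _ h₃).2.2.2 a' (hS _ h₂).1 b (hS _ h₁).2.1 ha hb
  rw [chordSlope_comm a', chordSlope_comm b] at e₁
  exact lt_asymm e₁ e₂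

lemma dotAt_neg_fst {γ : Type*} {x y : γ → ℝ} (a b c : γ) :
    dotAt (fun p => -x p) y a b c = dotAt x y a b c := by
  simp only [dotAt]; ring

lemma dotAt_neg_snd {γ : Type*} {x y : γ → ℝ} (a b c : γ) :
    dotAt x (fun p => -y p) a b c = dotAt x y a b c := by
  simp only [dotAt]; ring

/-- A graph with acute angles on a concave chain above a convex chain decomposes into two path
restricted ordered bipartite graphs and linearly many further edges. -/
lemma exists_decomposition_of_chains {γ : Type*} {P U V : Finset γ} {F : Set (γ × γ)}
    {x y : γ → ℝ} (hUV : (U : Set γ) ∪ V = P) (hU : IsConcaveChain x y U)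
    (hV : IsConcaveChain x (fun p => -y p) V) (hy : ∀ u ∈ U, ∀ v ∈ V, y v < y u)
    (hF : ∀ e ∈ F, e.1 ∈ P ∧ e.2 ∈ P ∧ e.1 ≠ e.2) (hsymm : ∀ u v, (u, v) ∈ F → (v, u) ∈ F)
    (hdot : ∀ u v w, (u, v) ∈ F → (u, w) ∈ F → v ≠ w → 0 < dotAt x y u v w) :
    ∃ (iU : LinearOrder U) (iV : LinearOrder V) (E₁ E₂ : Set (U × V)) (E₀ : Set (γ × γ)),
      Disjoint E₁ E₂ ∧ E₀ ⊆ F ∧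
      (∀ e : U × V, e ∈ E₁ ∪ E₂ → ((e.1 : γ), (e.2 : γ)) ∈ F) ∧
      (∀ a b : γ, (a, b) ∈ F → (a, b) ∈ E₀ ∨ (b, a) ∈ E₀ ∨
        ∃ e : U × V, (e ∈ E₁ ∨ e ∈ E₂) ∧
          (((e.1 : γ) = a ∧ (e.2 : γ) = b) ∨ ((e.1 : γ) = b ∧ (e.2 : γ) = a))) ∧
      (E₀.ncard : ℝ) ≤ 6 * P.card ∧
      @IsPRBG U V iU.toPreorder iV.toPreorder E₁ ∧
      @IsPRBG U V (revPreorder iU.toPreorder) (revPreorder iV.toPreorder) E₂ := by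
  classical
  have hUP : U ⊆ P := by
    rw [← Finset.coe_subset, ← hUV]; exact Set.subset_union_left
  have hVP : V ⊆ P := by
    rw [← Finset.coe_subset, ← hUV]; exact Set.subset_union_right
  have hmem : ∀ p ∈ P, p ∈ U ∨ p ∈ V := fun p hp => by
    have : p ∈ (U : Set γ) ∪ V := hUV ▸ hp
    simpa using this
  let SU := (U ×ˢ U).filter fun e => e ∈ F ∧ x e.1 < x e.2
  let SV := (V ×ˢ V).filter fun e => e ∈ F ∧ x e.1 < x e.2
  let SW := (U ×ˢ V).filter fun e => e ∈ F ∧ RightConvergent x y U V e.1 e.2 ∧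
    LeftConvergent x y U V e.1 e.2
  have hSU : SU.card ≤ 2 * U.card := hU.card_edges_le hsymm hdot fun e he => by
    simpa [SU, and_assoc] using he
  have hSV : SV.card ≤ 2 * V.card := hV.card_edges_le hsymm
    (fun u v w h₁ h₂ h₃ => by rw [dotAt_neg_snd]; exact hdot u v w h₁ h₂ h₃) fun e he => by
      simpa [SV, and_assoc] using he
  have hSW : SW.card ≤ 2 * P.card := card_biconvergent_le (x := x) (y := y) hUP hVP hU.1 hV.1
    fun e he => by
      simp only [SW, Finset.mem_filter, Finset.mem_product] at he
      exact ⟨he.1.1, he.1.2, he.2.2⟩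
  let iU : LinearOrder U := LinearOrder.lift' (fun u => x u)
    fun u u' h => Subtype.ext (hU.1 u.2 u'.2 h)
  let iV : LinearOrder V := LinearOrder.lift' (fun v => x v)
    fun v v' h => Subtype.ext (hV.1 v.2 v'.2 h)
  let E₁ : Set (U × V) := {e | ((e.1 : γ), (e.2 : γ)) ∈ F ∧ ¬ RightConvergent x y U V e.1 e.2}
  let E₂ : Set (U × V) := {e | ((e.1 : γ), (e.2 : γ)) ∈ F ∧ RightConvergent x y U V e.1 e.2 ∧
    ¬ LeftConvergent x y U V e.1 e.2}
  have hcover : ∀ u ∈ U, ∀ v ∈ V, (u, v) ∈ F → (u, v) ∈ SU ∪ SV ∪ SW ∨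
      ∃ e : U × V, (e ∈ E₁ ∨ e ∈ E₂) ∧ (e.1 : γ) = u ∧ (e.2 : γ) = v := by
    intro u hu v hv huv
    by_cases hR : RightConvergent x y U V u v
    · by_cases hL : LeftConvergent x y U V u v
      · left
        simp [SW, hu, hv, huv, hR, hL]
      · exact Or.inr ⟨(⟨u, hu⟩, ⟨v, hv⟩), Or.inr ⟨huv, hR, hL⟩, rfl, rfl⟩
    · exact Or.inr ⟨(⟨u, hu⟩, ⟨v, hv⟩), Or.inl ⟨huv, hR⟩, rfl, rfl⟩
  refine ⟨iU, iV, E₁, E₂, ((SU ∪ SV ∪ SW : Finset (γ × γ)) : Set (γ × γ)), ?_, ?_, ?_, ?_, ?_,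
    ?_, ?_⟩
  · rw [Set.disjoint_left]
    exact fun e h₁ h₂ => h₁.2 h₂.2.1
  · intro e he
    simp only [SU, SV, SW, Finset.coe_union, Set.mem_union, Finset.mem_coe, Finset.mem_filter] at he
    tauto
  · rintro e (he | he)
    exacts [he.1, he.1]
  · intro a b hab
    obtain ⟨ha, hb, hne⟩ := hF _ hab
    have hba := hsymm _ _ hab
    rcases hmem a ha with ha | ha <;> rcases hmem b hb with hb | hb
    · rcases lt_or_gt_of_ne (fun h => hne (hU.1 ha hb h)) with h | h
      · left; simp_all [SU]
      · right; left; simp_all [SU]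
    · rcases hcover a ha b hb hab with h | ⟨e, he, h⟩
      · exact Or.inl h
      · exact Or.inr (Or.inr ⟨e, he, Or.inl h⟩)
    · rcases hcover b hb a ha hba with h | ⟨e, he, h⟩
      · exact Or.inr (Or.inl h)
      · exact Or.inr (Or.inr ⟨e, he, Or.inr h⟩)
    · rcases lt_or_gt_of_ne (fun h => hne (hV.1 ha hb h)) with h | h
      · left; simp_all [SV]
      · right; left; simp_all [SV]
  · rw [Set.ncard_coe_finset]
    have h₁ := Finset.card_union_le (SU ∪ SV) SW
    have h₂ := Finset.card_union_le SU SV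
    have h₃ := Finset.card_le_card hUP
    have h₄ := Finset.card_le_card hVP
    exact_mod_cast (by omega : (SU ∪ SV ∪ SW).card ≤ 6 * P.card)
  · apply isPRBG_of_not_hasHook
    rintro ⟨u, u', u'', v, v', v'', h₁, h₂, h₃, h₄, h₅, h₆, h₇, h₈⟩
    have h₅ : x u < x u' := h₅
    have h₇ : x v < x v' := h₇
    exact (leftConvergent_of_not_rightConvergent hU hV u''.2 v''.2 h₄.2).not_acute hU hV
      u.2 u'.2 u''.2 v.2 v'.2 v''.2 (hy _ u.2 _ v.2) h₅ h₆ h₇ h₈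
      (hdot _ _ _ (hsymm _ _ h₁.1) (hsymm _ _ h₂.1) (ne_of_apply_ne x h₅.ne))
      (hdot _ _ _ h₁.1 h₃.1 (ne_of_apply_ne x h₇.ne))
  · apply @isPRBG_of_not_hasHook U V (revPreorder iU.toPreorder) (revPreorder iV.toPreorder)
    rintro ⟨u, u', u'', v, v', v'', h₁, h₂, h₃, h₄, h₅, h₆, h₇, h₈⟩
    have h₅ : x u' < x u := h₅
    have h₆ : x u'' ≤ x u' := h₆
    have h₇ : x v' < x v := h₇
    have h₈ : x v'' ≤ x v' := h₈
    refine (leftConvergent_neg_fst h₄.2.1).not_acute (isConcaveChain_neg_fst hU)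
      (isConcaveChain_neg_fst hV) u.2 u'.2 u''.2 v.2 v'.2 v''.2 (hy _ u.2 _ v.2)
      (neg_lt_neg h₅) (neg_le_neg h₆) (neg_lt_neg h₇) (neg_le_neg h₈) ?_ ?_
    · rw [dotAt_neg_fst]
      exact hdot _ _ _ (hsymm _ _ h₁.1) (hsymm _ _ h₂.1) (ne_of_apply_ne x h₅.ne')
    · rw [dotAt_neg_fst]
      exact hdot _ _ _ h₁.1 h₃.1 (ne_of_apply_ne x h₇.ne')

/-- The Euclidean plane. -/
abbrev Plane : Type := EuclideanSpace ℝ (Fin 2)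

/-- The coordinate along the line `cd`, scaled by the distance of `c` and `d`. -/
def alongCoord (c d p : Plane) : ℝ :=
  p 0 * (d 0 - c 0) + p 1 * (d 1 - c 1)

/-- The signed distance to the line `cd`, scaled by the distance of `c` and `d`. -/
def normalCoord (c d p : Plane) : ℝ :=
  (p 1 - c 1) * (d 0 - c 0) - (p 0 - c 0) * (d 1 - c 1)

lemma alongCoord_combo (c d p q : Plane) (a b : ℝ) :
    alongCoord c d (a • p + b • q) = a * alongCoord c d p + b * alongCoord c d q := by
  simp [alongCoord]; ring

lemma normalCoord_combo (c d p q : Plane) {a b : ℝ} (h : a + b = 1) :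
    normalCoord c d (a • p + b • q) = a * normalCoord c d p + b * normalCoord c d q := by
  obtain rfl := eq_sub_of_add_eq h
  simp [normalCoord]; ring

lemma sq_add_sq_pos {c d : Plane} (h : c ≠ d) : 0 < (d 0 - c 0) ^ 2 + (d 1 - c 1) ^ 2 := by
  by_contra hcon
  apply h
  ext i
  fin_cases i <;> simp <;> nlinarith [sq_nonneg (d 0 - c 0), sq_nonneg (d 1 - c 1)]

lemma eq_of_coord_eq {c d p q : Plane} (h : c ≠ d) (hx : alongCoord c d p = alongCoord c d q)
    (hy : normalCoord c d p = normalCoord c d q) : p = q := by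
  have h₀ := sq_add_sq_pos h
  simp only [alongCoord, normalCoord] at hx hy
  have e₀ : (p 0 - q 0) * ((d 0 - c 0) ^ 2 + (d 1 - c 1) ^ 2) = 0 := by
    linear_combination (d 0 - c 0) * hx - (d 1 - c 1) * hy
  have e₁ : (p 1 - q 1) * ((d 0 - c 0) ^ 2 + (d 1 - c 1) ^ 2) = 0 := by
    linear_combination (d 1 - c 1) * hx + (d 0 - c 0) * hy
  ext i
  fin_cases i
  · simpa [h₀.ne', sub_eq_zero] using e₀
  · simpa [h₀.ne', sub_eq_zero] using e₁

lemma dotAt_coord_pos {c d u v w : Plane} (h : c ≠ d)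
    (ha : EuclideanGeometry.angle u v w < Real.pi / 2) :
    0 < dotAt (alongCoord c d) (normalCoord c d) u v w := by
  have hin : 0 < inner ℝ (u -ᵥ v) (w -ᵥ v) := by
    rw [EuclideanGeometry.angle, InnerProductGeometry.angle, Real.arccos_lt_pi_div_two] at ha
    by_contra hcon
    exact ha.not_ge (div_nonpos_of_nonpos_of_nonneg (not_lt.1 hcon) (by positivity))
  have := mul_pos (sq_add_sq_pos h) hin
  simp only [PiLp.inner_apply, Fin.sum_univ_two] at this
  simp at this
  simp only [dotAt, alongCoord, normalCoord]
  linarith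

/-- A convex set contains every point between two of its points on the same normal of `cd`. -/
lemma Convex.mem_of_normalCoord_between {c d q s t : Plane} {K : Set Plane} (hK : Convex ℝ K)
    (h : c ≠ d) (hs : s ∈ K) (ht : t ∈ K) (hxs : alongCoord c d s = alongCoord c d q)
    (hxt : alongCoord c d t = alongCoord c d q) (h₁ : normalCoord c d t ≤ normalCoord c d q)
    (h₂ : normalCoord c d q ≤ normalCoord c d s) : q ∈ K := by
  obtain ⟨a, b, ha, hb, hab, e⟩ := (segment_eq_Icc (h₁.trans h₂)).symm ▸ Set.mem_Icc.2 ⟨h₁, h₂⟩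
  have : q = a • t + b • s := by
    refine eq_of_coord_eq h ?_ ?_
    · rw [alongCoord_combo, hxs, hxt, ← add_mul, hab, one_mul]
    · rw [normalCoord_combo _ _ _ _ hab, ← e]; rfl
  rw [this]
  exact hK ht hs ha hb hab

/-- The chord `pr` of a convex set passes over `q` at the interpolated height. -/
lemma Convex.exists_mem_chord {c d p q r : Plane} {K : Set Plane} (hK : Convex ℝ K)
    (hp : p ∈ K) (hr : r ∈ K) (h₁ : alongCoord c d p < alongCoord c d q)
    (h₂ : alongCoord c d q < alongCoord c d r) :
    ∃ s ∈ K, alongCoord c d s = alongCoord c d q ∧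
      normalCoord c d s = normalCoord c d p +
        chordSlope (alongCoord c d) (normalCoord c d) p r *
          (alongCoord c d q - alongCoord c d p) := by
  have hpos : 0 < alongCoord c d r - alongCoord c d p := by linarith
  let b := (alongCoord c d q - alongCoord c d p) / (alongCoord c d r - alongCoord c d p)
  have hb : b * (alongCoord c d r - alongCoord c d p) = alongCoord c d q - alongCoord c d p :=
    div_mul_cancel₀ _ hpos.ne'
  have hb₀ : 0 ≤ b := div_nonneg (by linarith) hpos.le
  have hb₁ : b ≤ 1 := (div_le_one hpos).2 (by linarith)
  refine ⟨(1 - b) • p + b • r, hK hp hr (by linarith) hb₀ (by ring), ?_, ?_⟩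
  · rw [alongCoord_combo]; linarith
  · rw [normalCoord_combo _ _ _ _ (by ring), ← hb,
      mul_left_comm, ← sub_eq_chordSlope_mul (by linarith)]
    ring

/-- Two points of `P` at maximal distance span a strip whose boundary contains no other point. -/
lemma alongCoord_lt_of_diametral {c d : Plane} {P : Finset Plane}
    (hmax : ∀ p ∈ P, dist p d ≤ dist c d) {p : Plane} (hp : p ∈ P) (hne : p ≠ c) :
    alongCoord c d c < alongCoord c d p := by
  have h := hmax p hp
  rw [EuclideanSpace.dist_eq, EuclideanSpace.dist_eq] at h
  have h := (Real.sqrt_le_sqrt_iff (by positivity)).1 h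
  simp only [Fin.sum_univ_two, Real.dist_eq, sq_abs] at h
  have := sq_add_sq_pos hne
  simp only [alongCoord]
  nlinarith

lemma alongCoord_swap (c d p : Plane) : alongCoord d c p = -alongCoord c d p := by
  simp only [alongCoord]; ring

lemma normalCoord_swap (c d p : Plane) : normalCoord d c p = -normalCoord c d p := by
  simp only [normalCoord]; ring

lemma ConvexPosition.notMem_convexHull {P : Set Plane} (hP : ConvexPosition P) {q : Plane}
    (hq : q ∈ P) : q ∉ convexHull ℝ (P \ {q}) := by
  have h := (convex_convexHull ℝ P).mem_extremePoints_iff_mem_sdiff_convexHull_sdiff.1 (hP q hq)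
  exact fun h' => h.2 (convexHull_mono (Set.sdiff_subset_sdiff_left (subset_convexHull ℝ P)) h')

/-- The points of a set in convex position on one side of a diametral pair form a concave
chain. -/
lemma ConvexPosition.isConcaveChain {P U : Finset Plane} (hP : ConvexPosition (P : Set Plane))
    {c d : Plane} (hcd : c ≠ d) (hc : c ∈ P) (hd : d ∈ P)
    (hxc : ∀ p ∈ P, p ≠ c → alongCoord c d c < alongCoord c d p)
    (hxd : ∀ p ∈ P, p ≠ d → alongCoord c d p < alongCoord c d d)
    (hUP : U ⊆ P) (hU : ∀ p ∈ U, 0 ≤ normalCoord c d p) :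
    IsConcaveChain (alongCoord c d) (normalCoord c d) U := by
  have hyc : normalCoord c d c = 0 := by simp [normalCoord]
  have hyd : normalCoord c d d = 0 := by simp only [normalCoord]; ring
  have hmem : ∀ {p q : Plane}, p ∈ P → p ≠ q → p ∈ convexHull ℝ ((P : Set Plane) \ {q}) :=
    fun hp hne => subset_convexHull ℝ _ ⟨hp, hne⟩
  -- no point of `U` lies below a point of the hull of the others
  have key : ∀ q ∈ U, q ≠ c → q ≠ d → ∀ s ∈ convexHull ℝ ((P : Set Plane) \ {q}),
      alongCoord c d s = alongCoord c d q → normalCoord c d s < normalCoord c d q := by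
    intro q hq hqc hqd s hs hxs
    by_contra! hle
    have hK := convex_convexHull ℝ ((P : Set Plane) \ {q})
    obtain ⟨t, ht, hxt, hyt⟩ := hK.exists_mem_chord (hmem hc hqc.symm) (hmem hd hqd.symm)
      (hxc q (hUP hq) hqc) (hxd q (hUP hq) hqd)
    refine hP.notMem_convexHull (hUP hq)
      (hK.mem_of_normalCoord_between hcd hs ht hxs hxt ?_ hle)
    rw [hyt, chordSlope, hyc, hyd]
    simpa using hU q hq
  refine ⟨?_, ?_⟩
  · intro p hp q hq hx
    by_contra hne
    have hends : ∀ {a b : Plane}, a ∈ U → b ∈ U → a ≠ b → alongCoord c d a = alongCoord c d b →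
        a ≠ c ∧ a ≠ d := by
      rintro a b ha hb hab hx
      refine ⟨?_, ?_⟩
      · rintro rfl
        exact (hxc b (hUP hb) hab.symm).ne hx
      · rintro rfl
        exact (hxd b (hUP hb) hab.symm).ne' hx
    have hp' := hends hp hq hne hx
    have hq' := hends hq hp (Ne.symm hne) hx.symm
    exact lt_asymm (key p hp hp'.1 hp'.2 q (hmem (hUP hq) (Ne.symm hne)) hx.symm)
      (key q hq hq'.1 hq'.2 p (hmem (hUP hp) hne) hx)
  · intro p hp q hq r hr h₁ h₂
    have hqc : q ≠ c := by
      rintro rfl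
      exact lt_asymm h₁ (hxc p (hUP hp) (ne_of_apply_ne _ h₁.ne))
    have hqd : q ≠ d := by
      rintro rfl
      exact lt_asymm h₂ (hxd r (hUP hr) (ne_of_apply_ne _ h₂.ne'))
    obtain ⟨s, hs, hxs, hys⟩ := (convex_convexHull ℝ ((P : Set Plane) \ {q})).exists_mem_chord
      (hmem (hUP hp) (ne_of_apply_ne _ h₁.ne)) (hmem (hUP hr) (ne_of_apply_ne _ h₂.ne')) h₁ h₂
    have h := key q hq hqc hqd s hs hxs
    rw [hys] at h
    have e₁ := sub_eq_chordSlope_mul (y := normalCoord c d) h₁.ne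
    have e₂ := sub_eq_chordSlope_mul (y := normalCoord c d) h₂.ne
    have e₃ := sub_eq_chordSlope_mul (y := normalCoord c d) (h₁.trans h₂).ne
    generalize chordSlope (alongCoord c d) (normalCoord c d) p q = s₁ at *
    generalize chordSlope (alongCoord c d) (normalCoord c d) q r = s₂ at *
    generalize chordSlope (alongCoord c d) (normalCoord c d) p r = s₃ at *
    have f₁ : s₃ < s₁ := by
      by_contra! hle
      nlinarith
    by_contra! hle
    nlinarith

/-- There is an absolute constant `C` such that every locally Gabriel graph `(P, F)` on a
set of `n` points in convex position in the plane admits a partition `P = U ∪ V`, linear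
orders on `U` and `V`, and a partition of the edges into `E₁ ∪ E₂ ∪ E₀` with
`E₁, E₂ ⊆ U × V` and `|E₀| ≤ C·n`, such that `(U, V, E₁)` with the given orders and
`(U, V, E₂)` with both orders reversed each satisfy the path restricted property. -/
theorem lgg_decomposes_into_two_prbgs :
    ∃ C : ℝ, ∀ (P : Finset (EuclideanSpace ℝ (Fin 2)))
      (F : Set (EuclideanSpace ℝ (Fin 2) × EuclideanSpace ℝ (Fin 2))),
      ConvexPosition (P : Set (EuclideanSpace ℝ (Fin 2))) →
      IsLGG (P : Set (EuclideanSpace ℝ (Fin 2))) F →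
      ∃ (U V : Finset (EuclideanSpace ℝ (Fin 2))),
        (U : Set (EuclideanSpace ℝ (Fin 2))) ∪ (V : Set (EuclideanSpace ℝ (Fin 2))) =
            (P : Set (EuclideanSpace ℝ (Fin 2))) ∧
        Disjoint U V ∧
        ∃ (iU : LinearOrder ↥U) (iV : LinearOrder ↥V)
          (E₁ E₂ : Set (↥U × ↥V))
          (E₀ : Set (EuclideanSpace ℝ (Fin 2) × EuclideanSpace ℝ (Fin 2))),
          Disjoint E₁ E₂ ∧ E₀ ⊆ F ∧
          (∀ e : ↥U × ↥V, e ∈ E₁ ∪ E₂ →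
            ((e.1 : EuclideanSpace ℝ (Fin 2)), (e.2 : EuclideanSpace ℝ (Fin 2))) ∈ F) ∧
          (∀ a b : EuclideanSpace ℝ (Fin 2), (a, b) ∈ F →
            (a, b) ∈ E₀ ∨ (b, a) ∈ E₀ ∨
            ∃ e : ↥U × ↥V, (e ∈ E₁ ∨ e ∈ E₂) ∧
              (((e.1 : EuclideanSpace ℝ (Fin 2)) = a ∧
                  (e.2 : EuclideanSpace ℝ (Fin 2)) = b) ∨
                ((e.1 : EuclideanSpace ℝ (Fin 2)) = b ∧
                  (e.2 : EuclideanSpace ℝ (Fin 2)) = a))) ∧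
          (E₀.ncard : ℝ) ≤ C * P.card ∧
          @IsPRBG ↥U ↥V iU.toPreorder iV.toPreorder E₁ ∧
          @IsPRBG ↥U ↥V (revPreorder iU.toPreorder) (revPreorder iV.toPreorder) E₂ := by
  refine ⟨6, fun P F hP ⟨hF, hsymm, hang⟩ => ?_⟩
  rcases P.eq_empty_or_nonempty with rfl | hne
  · exact ⟨∅, ∅, by simp, by simp, exists_decomposition_of_chains (x := 0) (y := 0) (by simp)
      (by simp [IsConcaveChain]) (by simp [IsConcaveChain]) (by simp) hF hsymm
      fun u v w h => by simpa using (hF _ h).1⟩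
  obtain ⟨⟨c, d⟩, hcd, hmax⟩ := (P ×ˢ P).exists_max_image (fun e => dist e.1 e.2)
    (hne.product hne)
  obtain ⟨hc, hd⟩ := Finset.mem_product.1 hcd
  by_cases hne : c = d
  · have hsub : ∀ p ∈ P, ∀ q ∈ P, p = q := fun p hp q hq => by
      have := hmax (p, q) (Finset.mem_product.2 ⟨hp, hq⟩)
      simp only [hne, dist_self] at this
      exact dist_le_zero.1 this
    exact ⟨P, ∅, by simp, by simp, exists_decomposition_of_chains (x := 0) (y := 0) (by simp)
      ⟨fun p hp q hq _ => hsub p hp q hq, by simp⟩ (by simp [IsConcaveChain]) (by simp) hF hsymm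
      fun u v w h => absurd (hsub _ (hF _ h).1 _ (hF _ h).2.1) (hF _ h).2.2⟩
  have hxc : ∀ p ∈ P, p ≠ c → alongCoord c d c < alongCoord c d p := fun p hp =>
    alongCoord_lt_of_diametral (fun p hp => hmax (p, d) (Finset.mem_product.2 ⟨hp, hd⟩)) hp
  have hxd : ∀ p ∈ P, p ≠ d → alongCoord d c d < alongCoord d c p := fun p hp =>
    alongCoord_lt_of_diametral (fun p hp => by
      rw [dist_comm d c]; exact hmax (p, c) (Finset.mem_product.2 ⟨hp, hc⟩)) hp
  refine ⟨P.filter fun p => 0 ≤ normalCoord c d p, P.filter fun p => ¬ 0 ≤ normalCoord c d p,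
    by rw [← Finset.coe_union, Finset.filter_union_filter_not_eq],
    Finset.disjoint_filter_filter_not _ _ _,
    exists_decomposition_of_chains (x := alongCoord c d) (y := normalCoord c d)
      (by rw [← Finset.coe_union, Finset.filter_union_filter_not_eq])
      ?_ ?_ ?_ hF hsymm fun u v w h₁ h₂ h₃ => dotAt_coord_pos hne (hang u v w h₁ h₂ h₃).1⟩
  · refine hP.isConcaveChain hne hc hd hxc (fun p hp hpd => ?_) (Finset.filter_subset _ _)
      fun p hp => (Finset.mem_filter.1 hp).2
    simpa only [alongCoord_swap c d, neg_lt_neg_iff] using hxd p hp hpd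
  · have h := isConcaveChain_neg_fst (hP.isConcaveChain (Ne.symm hne) hd hc hxd
      (fun p hp hpc => by simpa only [alongCoord_swap c d, neg_lt_neg_iff] using hxc p hp hpc)
      (Finset.filter_subset (fun p => ¬ 0 ≤ normalCoord c d p) P) fun p hp => by
        rw [normalCoord_swap c d]
        linarith [not_le.1 (Finset.mem_filter.1 hp).2])
    simpa only [alongCoord_swap c d, neg_neg, funext (normalCoord_swap c d)] using h
  · intro u hu v hv
    exact (not_le.1 (Finset.mem_filter.1 hv).2).trans_le (Finset.mem_filter.1 hu).2
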